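/- For every δ>0 and every ν∈𝒫(V), I_δ(ν)<∞ if and only if there exists q̂∈𝒯_G with νq̂=ν. -/

import Mathlib

open scoped BigOperators Classical ENNReal
open Filter Topology

noncomputable section
namespace ORRW

/-- Probability measures on a finite type `A`, topologized as a subset of `ℝ^A`. -/
abbrev ProbMeas (A : Type) [Fintype A] : Type :=
  {p : A → ℝ // (∀ a, 0 ≤ p a) ∧ ∑ a, p a = 1}

/-- Relative entropy `R(γ‖ρ)` between two finitely supported "rows", valued in `EReal`,
with `+∞` when absolute continuity fails. -/
def relEnt {A : Type} [Fintype A] (γ ρ : A → ℝ) : EReal :=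
  if ∀ a, ρ a = 0 → γ a = 0 then ((∑ a, γ a * Real.log (γ a / ρ a) : ℝ) : EReal)
  else (⊤ : EReal)

/-- `∫ R(q‖p) dν = Σ_a ν(a) · R(q(a,·)‖p(a,·))`. -/
def relEntInt {A : Type} [Fintype A] (ν : A → ℝ) (q p : A → A → ℝ) : EReal :=
  ∑ a, (ν a : EReal) * relEnt (q a) (p a)

/-- `ν` is an invariant measure of the kernel `q`. -/
def Invariant {A : Type} [Fintype A] (ν : A → ℝ) (q : A → A → ℝ) : Prop :=
  ∀ y, ∑ x, ν x * q x y = ν y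

/-- Extended-real logarithm: `⊥` at nonpositive arguments. -/
def elog (x : ℝ) : EReal := if x ≤ 0 then (⊥ : EReal) else ((Real.log x : ℝ) : EReal)

/-- Empirical measure of a finite trajectory `f : Fin (n+1) → A`. -/
def empMeas {A : Type} [Fintype A] [DecidableEq A] (n : ℕ) (f : Fin (n + 1) → A) :
    ProbMeas A :=
  ⟨fun a => ((Finset.univ.filter (fun i => f i = a)).card : ℝ) / (n + 1),
    fun a => by positivity, by
      have key : ∑ a : A, ((Finset.univ.filter (fun i => f i = a)).card) = n + 1 := by
        have h := Finset.card_eq_sum_card_fiberwise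
          (s := (Finset.univ : Finset (Fin (n + 1)))) (t := (Finset.univ : Finset A))
          (f := f) (fun i _ => Finset.mem_univ (f i))
        simpa using h.symm
      have key' : ∑ a : A, (((Finset.univ.filter (fun i => f i = a)).card : ℝ)) = (n : ℝ) + 1 := by
        have h2 := congrArg (fun m : ℕ => (m : ℝ)) key
        push_cast at h2
        simpa using h2
      rw [← Finset.sum_div, key', div_self (by positivity)]⟩

section Graph

variable {V : Type} [Fintype V] [DecidableEq V]

/-- Weight of an edge given the set `F` of already traversed edges. -/
def gw (δ : ℝ) (F : Finset (Sym2 V)) (e : Sym2 V) : ℝ := if e ∈ F then δ else 1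

/-- The transition kernel `p̂_F` on `V`. -/
def phat (G : SimpleGraph V) [DecidableRel G.Adj] (δ : ℝ) (F : Finset (Sym2 V))
    (x y : V) : ℝ :=
  if G.Adj x y then gw δ F s(x, y) / ∑ z ∈ G.neighborFinset x, gw δ F s(x, z) else 0

/-- Two edges are adjacent iff they share a vertex. -/
def edgeAdj (e e' : Sym2 V) : Prop := ∃ v, v ∈ e ∧ v ∈ e'

/-- `x` is a vertex of the edge set `F`. -/
def memVerts (F : Finset (Sym2 V)) (x : V) : Prop := ∃ e ∈ F, x ∈ e

/-- `𝒯_G`: stochastic matrices on `V` adapted to `G`. -/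
def TG (G : SimpleGraph V) : Set (V → V → ℝ) :=
  {q | (∀ x y, 0 ≤ q x y) ∧ (∀ x, ∑ y, q x y = 1) ∧ ∀ x y, q x y ≠ 0 → G.Adj x y}

/-- `𝒯(F)`: stochastic kernels from the vertex set of `F` to `V`, supported on `F`. -/
def TE (F : Finset (Sym2 V)) : Set (V → V → ℝ) :=
  {q | (∀ x y, 0 ≤ q x y) ∧ (∀ x, memVerts F x → ∑ y, q x y = 1) ∧
    ∀ x y, q x y ≠ 0 → s(x, y) ∈ F}

/-- `ℰ`: admissible increasing sequences of traversed edge sets. -/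
def seqE (G : SimpleGraph V) [DecidableRel G.Adj] (v₁ : V) :
    Set (Fin G.edgeFinset.card → Finset (Sym2 V)) :=
  {Es | (∀ k, Es k ⊆ G.edgeFinset) ∧ (∀ k, (Es k).card = (k : ℕ) + 1) ∧
    (∀ k l : Fin G.edgeFinset.card, (k : ℕ) + 1 = (l : ℕ) → Es k ⊂ Es l) ∧
    (∀ k : Fin G.edgeFinset.card, (k : ℕ) = 0 → ∃ e ∈ Es k, v₁ ∈ e) ∧
    (∀ k l : Fin G.edgeFinset.card, (k : ℕ) + 1 = (l : ℕ) →
      ∀ e ∈ Es l \ Es k, ∃ e' ∈ Es k, edgeAdj e e')}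

/-- The rate function `I_δ`. -/
def Ifun (G : SimpleGraph V) [DecidableRel G.Adj] (v₁ : V) (δ : ℝ) (ν : ProbMeas V) : EReal :=
  sInf { c : EReal |
    ∃ (νs : Fin G.edgeFinset.card → ProbMeas V) (r : Fin G.edgeFinset.card → ℝ)
      (Es : Fin G.edgeFinset.card → Finset (Sym2 V))
      (qs : Fin G.edgeFinset.card → V → V → ℝ),
      Es ∈ seqE G v₁ ∧ (∀ k, 0 ≤ r k) ∧ (∑ k, r k = 1) ∧
      (∀ k x, (νs k).1 x ≠ 0 → memVerts (Es k) x) ∧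
      (∀ x, ∑ k, r k * (νs k).1 x = ν.1 x) ∧
      (∀ k, qs k ∈ TE (Es k)) ∧ (∀ k, Invariant (νs k).1 (qs k)) ∧
      c = ∑ k, ((r k : ℝ) : EReal) * relEntInt (νs k).1 (qs k) (phat G δ (Es k)) }

/-- Edges traversed along a path, given as a list of consecutively visited vertices. -/
def pathEdges : List V → Finset (Sym2 V)
  | [] => ∅
  | [_] => ∅
  | x :: y :: t => insert s(x, y) (pathEdges (y :: t))

/-- Product of one-step ORRW transition probabilities along a trajectory,
the trajectory being listed in reverse chronological order. -/
def stepsProb (G : SimpleGraph V) [DecidableRel G.Adj] (δ : ℝ) : List V → ℝ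
  | [] => 1
  | [_] => 1
  | y :: x :: t => phat G δ (pathEdges (x :: t).reverse) x y * stepsProb G δ (x :: t)

/-- The law of `(X_0, …, X_n)` for the `δ`-ORRW started at `v₁`. -/
def trajProb (G : SimpleGraph V) [DecidableRel G.Adj] (δ : ℝ) (v₁ : V) (n : ℕ)
    (f : Fin (n + 1) → V) : ℝ :=
  if f 0 = v₁ then stepsProb G δ (List.ofFn f).reverse else 0

/-- `P_{v₁}(L_{n+1} ∈ C)`: the probability that the empirical measure of the first
`n+1` positions of the `δ`-ORRW lies in `C`. -/
def probEmp (G : SimpleGraph V) [DecidableRel G.Adj] (δ : ℝ) (v₁ : V) (n : ℕ)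
    (C : Set (ProbMeas V)) : ℝ :=
  ∑ f : Fin (n + 1) → V, if empMeas n f ∈ C then trajProb G δ v₁ n f else 0

/-- The family `𝒮` of edge sets of connected subgraphs having an edge at `v₁`. -/
def scrS (G : SimpleGraph V) [DecidableRel G.Adj] (v₁ : V) : Set (Finset (Sym2 V)) :=
  {F | F ⊆ G.edgeFinset ∧ (∃ e ∈ F, v₁ ∈ e) ∧
    ∀ x y : V, memVerts F x → memVerts F y →
      (SimpleGraph.fromEdgeSet (↑F : Set (Sym2 V))).Reachable x y}

/-- `𝒮₀` is a decreasing subset of `𝒮`. -/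
def DecreasingIn (G : SimpleGraph V) [DecidableRel G.Adj] (v₁ : V)
    (S0 : Set (Finset (Sym2 V))) : Prop :=
  ∀ F₁ F₂, F₁ ∈ scrS G v₁ → F₂ ∈ scrS G v₁ → F₁ ⊆ F₂ → F₂ ∈ S0 → F₁ ∈ S0

/-- `P_{v₁}(T_{𝒮₀} > n)`. -/
def probTgt (G : SimpleGraph V) [DecidableRel G.Adj] (δ : ℝ) (v₁ : V)
    (S0 : Set (Finset (Sym2 V))) (n : ℕ) : ℝ :=
  ∑ f : Fin (n + 1) → V,
    if ∀ k, 1 ≤ k → k ≤ n → pathEdges ((List.ofFn f).take (k + 1)) ∈ S0 then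
      trajProb G δ v₁ n f
    else 0

/-- `P_{v₁}(C_E > n)` for the edge cover time `C_E`. -/
def probCgt (G : SimpleGraph V) [DecidableRel G.Adj] (δ : ℝ) (v₁ : V) (n : ℕ) : ℝ :=
  ∑ f : Fin (n + 1) → V,
    if ¬ G.edgeFinset ⊆ pathEdges (List.ofFn f) then trajProb G δ v₁ n f else 0

/-- `E_{v₁}[exp (α T_{𝒮₀})]`, valued in `ℝ≥0∞`; the stopping time takes values in
`{1, 2, …} ∪ {∞}`. -/
def expT (G : SimpleGraph V) [DecidableRel G.Adj] (δ : ℝ) (v₁ : V)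
    (S0 : Set (Finset (Sym2 V))) (α : ℝ) : ℝ≥0∞ :=
  (∑' n : ℕ, ENNReal.ofReal
      (Real.exp (α * (n + 1)) * (probTgt G δ v₁ S0 n - probTgt G δ v₁ S0 (n + 1)))) +
    (if 0 < α then (⊤ : ℝ≥0∞) else if α = 0 then 1 else 0) *
      ENNReal.ofReal (⨅ n : ℕ, probTgt G δ v₁ S0 n)

/-- `E_{v₁}[exp (α C_E)]`, valued in `ℝ≥0∞`. -/
def expC (G : SimpleGraph V) [DecidableRel G.Adj] (δ : ℝ) (v₁ : V) (α : ℝ) : ℝ≥0∞ :=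
  (∑' n : ℕ, ENNReal.ofReal
      (Real.exp (α * (n + 1)) * (probCgt G δ v₁ n - probCgt G δ v₁ (n + 1)))) +
    (if 0 < α then (⊤ : ℝ≥0∞) else if α = 0 then 1 else 0) *
      ENNReal.ofReal (⨅ n : ℕ, probCgt G δ v₁ n)

/-- The critical exponent `α_c(δ)` attached to a family `𝒮₀` of edge sets. -/
def alphaC (G : SimpleGraph V) [DecidableRel G.Adj] (δ : ℝ)
    (S0 : Set (Finset (Sym2 V))) : EReal :=
  sInf { c : EReal | ∃ (ν : ProbMeas V) (F : Finset (Sym2 V)) (q : V → V → ℝ),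
    F ∈ S0 ∧ q ∈ TE F ∧ (∀ x, ν.1 x ≠ 0 → memVerts F x) ∧ Invariant ν.1 q ∧
    c = relEntInt ν.1 q (phat G δ F) }

/-- `α_c^1(δ)`: the critical exponent for the cover time. -/
def alphaC1 (G : SimpleGraph V) [DecidableRel G.Adj] (v₁ : V) (δ : ℝ) : EReal :=
  alphaC G δ (scrS G v₁ \ {G.edgeFinset})

end Graph

section Lifted

variable {V : Type} [Fintype V] [LinearOrder V]

/-- Smaller endpoint of an unordered pair. -/
def sym2lo (e : Sym2 V) : V := Sym2.lift ⟨fun a b => min a b, fun a b => min_comm a b⟩ e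

/-- Larger endpoint of an unordered pair. -/
def sym2hi (e : Sym2 V) : V := Sym2.lift ⟨fun a b => max a b, fun a b => max_comm a b⟩ e

/-- `V_S = E × {-1, 1}`: vertex set of the lifted directed graph `S`
(`true` plays the role of `+1`). -/
abbrev VSet (G : SimpleGraph V) [DecidableRel G.Adj] : Type :=
  {e : Sym2 V // e ∈ G.edgeFinset} × Bool

/-- Tail `z⁻` of an oriented edge. -/
def zm (G : SimpleGraph V) [DecidableRel G.Adj] (z : VSet G) : V :=
  if z.2 then sym2lo z.1.1 else sym2hi z.1.1

/-- Head `z⁺` of an oriented edge. -/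
def zp (G : SimpleGraph V) [DecidableRel G.Adj] (z : VSet G) : V :=
  if z.2 then sym2hi z.1.1 else sym2lo z.1.1

/-- The kernel `p_F` on the lifted directed graph `S`. -/
def pS (G : SimpleGraph V) [DecidableRel G.Adj] (δ : ℝ) (F : Finset (Sym2 V))
    (z₁ z₂ : VSet G) : ℝ :=
  if zp G z₁ = zm G z₂ then
    gw δ F z₂.1.1 / ∑ w : VSet G, (if zp G z₁ = zm G w then gw δ F w.1.1 else 0)
  else 0

/-- `𝒯_S`: stochastic matrices on `V_S` moving along orientations. -/
def TS (G : SimpleGraph V) [DecidableRel G.Adj] : Set (VSet G → VSet G → ℝ) :=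
  {q | (∀ z w, 0 ≤ q z w) ∧ (∀ z, ∑ w, q z w = 1) ∧ ∀ z w, q z w ≠ 0 → zp G z = zm G w}

/-- `𝒞(𝒮₀)`: probability measures on `V_S` whose first marginal is supported in
some member of `𝒮₀`. -/
def CC (G : SimpleGraph V) [DecidableRel G.Adj] (S0 : Set (Finset (Sym2 V))) :
    Set (ProbMeas (VSet G)) :=
  {μ | ∃ F ∈ S0, ∀ z : VSet G, μ.1 z ≠ 0 → z.1.1 ∈ F}

/-- `Λ_{δ,𝒮₀}`. -/
def Lam (G : SimpleGraph V) [DecidableRel G.Adj] (v₁ : V) (δ : ℝ)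
    (S0 : Set (Finset (Sym2 V))) (μ : ProbMeas (VSet G)) : EReal :=
  sInf { c : EReal |
    ∃ (μs : Fin G.edgeFinset.card → ProbMeas (VSet G)) (r : Fin G.edgeFinset.card → ℝ)
      (Es : Fin G.edgeFinset.card → Finset (Sym2 V))
      (qs : Fin G.edgeFinset.card → VSet G → VSet G → ℝ),
      Es ∈ seqE G v₁ ∧ (∀ k, 0 ≤ r k) ∧ (∀ k, Es k ∉ S0 → r k = 0) ∧ (∑ k, r k = 1) ∧
      (∀ k z, (μs k).1 z ≠ 0 → z.1.1 ∈ Es k) ∧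
      (∀ z, ∑ k, r k * (μs k).1 z = μ.1 z) ∧
      (∀ k, qs k ∈ TS G) ∧ (∀ k, Invariant (μs k).1 (qs k)) ∧
      c = ∑ k, ((r k : ℝ) : EReal) * relEntInt (μs k).1 (qs k) (pS G δ (Es k)) }

/-- `Λ^z_{δ,𝒮₀}`. -/
def LamZ (G : SimpleGraph V) [DecidableRel G.Adj] (v₁ : V) (δ : ℝ)
    (S0 : Set (Finset (Sym2 V))) (z : VSet G) (μ : ProbMeas (VSet G)) : EReal :=
  sInf { c : EReal |
    ∃ (μs : Fin G.edgeFinset.card → ProbMeas (VSet G)) (r : Fin G.edgeFinset.card → ℝ)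
      (Es : Fin G.edgeFinset.card → Finset (Sym2 V))
      (qs : Fin G.edgeFinset.card → VSet G → VSet G → ℝ),
      Es ∈ seqE G v₁ ∧ (∀ k : Fin G.edgeFinset.card, (k : ℕ) = 0 → Es k = {z.1.1}) ∧
      (∀ k, 0 ≤ r k) ∧ (∀ k, Es k ∉ S0 → r k = 0) ∧ (∑ k, r k = 1) ∧
      (∀ k w, (μs k).1 w ≠ 0 → w.1.1 ∈ Es k) ∧
      (∀ w, ∑ k, r k * (μs k).1 w = μ.1 w) ∧
      (∀ k, qs k ∈ TS G) ∧ (∀ k, Invariant (μs k).1 (qs k)) ∧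
      c = ∑ k, ((r k : ℝ) : EReal) * relEntInt (μs k).1 (qs k) (pS G δ (Es k)) }

/-- `Λ₁`: the Donsker–Varadhan functional for the simple random walk on `S`
(whose kernel is `pS` with `δ = 1`). -/
def Lam1 (G : SimpleGraph V) [DecidableRel G.Adj] (μ : ProbMeas (VSet G)) : EReal :=
  sInf { c : EReal | ∃ q ∈ TS G, Invariant μ.1 q ∧ c = relEntInt μ.1 q (pS G 1 ∅) }

/-- Boundary `∂F` of an edge set: edges of `F` adjacent to some edge outside `F`. -/
def bdry (G : SimpleGraph V) [DecidableRel G.Adj] (F : Finset (Sym2 V)) : Finset (Sym2 V) :=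
  F.filter fun e => ∃ e' ∈ G.edgeFinset \ F, edgeAdj e e'

/-- Out-degree `d(z)` of `z` in `S`. -/
def outDeg (G : SimpleGraph V) [DecidableRel G.Adj] (z : VSet G) : ℕ :=
  (Finset.univ.filter (fun w : VSet G => zp G z = zm G w)).card

/-- Number `k(z)` of out-neighbours of `z` lying in `F × {-1, 1}`. -/
def outDegIn (G : SimpleGraph V) [DecidableRel G.Adj] (F : Finset (Sym2 V))
    (z : VSet G) : ℕ :=
  (Finset.univ.filter (fun w : VSet G => zp G z = zm G w ∧ w.1.1 ∈ F)).card

/-- The law of `(Z_0, …, Z_n)` for the lifted `δ`-ORRW conditioned on `Z_0 = z`. -/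
def liftTraj (G : SimpleGraph V) [DecidableRel G.Adj] (δ : ℝ) (z : VSet G) (n : ℕ)
    (g : Fin (n + 1) → VSet G) : ℝ :=
  if g 0 = z then
    ∏ i : Fin n,
      pS G δ ((Finset.Iic i.castSucc).image (fun j => (g j).1.1))
        (g i.castSucc) (g i.succ)
  else 0

/-- The restricted logarithmic Laplace functional `W^{n+1}_{𝒮₀}(z)`. -/
def Wres (G : SimpleGraph V) [DecidableRel G.Adj] (δ : ℝ) (z : VSet G)
    (S0 : Set (Finset (Sym2 V))) (h : ProbMeas (VSet G) → ℝ) (n : ℕ) : EReal :=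
  if 0 < ∑ g : Fin (n + 1) → VSet G,
      (if empMeas n g ∈ CC G S0 then liftTraj G δ z n g else 0) then
    ((-((((n : ℝ) + 1))⁻¹ * Real.log (∑ g : Fin (n + 1) → VSet G,
      if empMeas n g ∈ CC G S0 then
        Real.exp (-((n : ℝ) + 1) * h (empMeas n g)) * liftTraj G δ z n g
      else 0)) : ℝ) : EReal)
  else (⊤ : EReal)

end Lifted

/-!
A pair `(ν, q)` with `ν q = ν` is the same thing as its flow `ν(x) q(x, y)`, a measure on `V × V`
both of whose marginals are `ν`; the kernel is recovered by disintegration. Flows can be mixed,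
kernels cannot: if `(ν_k, r_k, E_k, q̂_k)_k` is admissible for `ν`, then `∑ k, r_k ν_k(x) q̂_k(x, y)`
is a flow with marginals `ν` carried by the edges of `G`, and disintegrating it gives `q̂`.

Conversely, connectedness yields a sequence in `ℰ`, and its last member is the whole edge set. All
the weight is put there, on `(ν, q̂)`; as `p̂_E` charges every edge of `G`, the cost is finite. The
other members carry no weight, but `Â(ν)` still asks for an invariant pair on each of them, which
is provided by the simple random walk.
-/

section Flow

variable {A : Type*} [Fintype A] {ν : A → ℝ} {m : A → A → ℝ}

/-- `m` is a stationary flow of `ν`: a nonnegative measure on `A × A`, encoded as a matrix, both of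
whose marginals are `ν`. -/
structure IsFlow (ν : A → ℝ) (m : A → A → ℝ) : Prop where
  nonneg : ∀ x y, 0 ≤ m x y
  sum_right : ∀ x, ∑ y, m x y = ν x
  sum_left : ∀ y, ∑ x, m x y = ν y

/-- The disintegration `m(x, y) / ν(x)` of `m` with respect to its first marginal `ν`, completed by
`p` on the rows where `ν` vanishes. -/
def disintegrate (ν : A → ℝ) (m p : A → A → ℝ) (x y : A) : ℝ :=
  if ν x = 0 then p x y else m x y / ν x

namespace IsFlow

theorem marginal_nonneg (hm : IsFlow ν m) (x : A) : 0 ≤ ν x :=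
  hm.sum_right x ▸ Finset.sum_nonneg fun y _ => hm.nonneg x y

theorem eq_zero_of_marginal_eq_zero (hm : IsFlow ν m) {x : A} (hx : ν x = 0) (y : A) :
    m x y = 0 :=
  (Finset.sum_eq_zero_iff_of_nonneg fun z _ => hm.nonneg x z).mp
    ((hm.sum_right x).trans hx) y (Finset.mem_univ y)

theorem of_symm (hnonneg : ∀ x y, 0 ≤ m x y) (hsymm : ∀ x y, m x y = m y x) :
    IsFlow (fun x => ∑ y, m x y) m where
  nonneg := hnonneg
  sum_right _ := rfl
  sum_left y := Finset.sum_congr rfl fun x _ => hsymm x y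

theorem sum_mul {ι : Type*} {s : Finset ι} {r : ι → ℝ} {ν : ι → A → ℝ} {m : ι → A → A → ℝ}
    (hr : ∀ k ∈ s, 0 ≤ r k) (hm : ∀ k ∈ s, IsFlow (ν k) (m k)) :
    IsFlow (fun x => ∑ k ∈ s, r k * ν k x) (fun x y => ∑ k ∈ s, r k * m k x y) where
  nonneg x y := Finset.sum_nonneg fun k hk => mul_nonneg (hr k hk) ((hm k hk).nonneg x y)
  sum_right x := by
    rw [Finset.sum_comm]
    exact Finset.sum_congr rfl fun k hk => by rw [← Finset.mul_sum, (hm k hk).sum_right]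
  sum_left y := by
    rw [Finset.sum_comm]
    exact Finset.sum_congr rfl fun k hk => by rw [← Finset.mul_sum, (hm k hk).sum_left]

theorem mul_disintegrate (hm : IsFlow ν m) (p : A → A → ℝ) (x y : A) :
    ν x * disintegrate ν m p x y = m x y := by
  by_cases hx : ν x = 0
  · rw [hx, zero_mul, hm.eq_zero_of_marginal_eq_zero hx]
  · rw [disintegrate, if_neg hx, mul_div_cancel₀ _ hx]

end IsFlow

end Flow

section Invariance

variable {A : Type} [Fintype A] {ν : A → ℝ}

theorem Invariant.isFlow {q : A → A → ℝ} (hinv : Invariant ν q) (hν : ∀ x, 0 ≤ ν x)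
    (hq : ∀ x y, 0 ≤ q x y) (hsum : ∀ x, ν x ≠ 0 → ∑ y, q x y = 1) :
    IsFlow ν (fun x y => ν x * q x y) where
  nonneg x y := mul_nonneg (hν x) (hq x y)
  sum_right x := by
    rw [← Finset.mul_sum]
    by_cases hx : ν x = 0
    · rw [hx, zero_mul]
    · rw [hsum x hx, mul_one]
  sum_left := hinv

theorem IsFlow.invariant_disintegrate {m : A → A → ℝ} (hm : IsFlow ν m) (p : A → A → ℝ) :
    Invariant ν (disintegrate ν m p) := fun y => by
  simp only [hm.mul_disintegrate, hm.sum_left]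

end Invariance

section RelativeEntropy

variable {A : Type} [Fintype A]

theorem relEntInt_eq_coe {q p : A → A → ℝ} (hac : ∀ x y, p x y = 0 → q x y = 0) (ν : A → ℝ) :
    relEntInt ν q p = ((∑ x, ν x * ∑ y, q x y * Real.log (q x y / p x y) : ℝ) : EReal) := by
  have coe_sum (f : A → ℝ) : ((∑ x, f x : ℝ) : EReal) = ∑ x, (f x : EReal) :=
    map_sum (⟨⟨Real.toEReal, EReal.coe_zero⟩, EReal.coe_add⟩ : ℝ →+ EReal) f Finset.univ
  rw [coe_sum]
  exact Finset.sum_congr rfl fun x _ => by rw [relEnt, if_pos (hac x), EReal.coe_mul]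

end RelativeEntropy

section EdgeSets

variable {V : Type}

theorem memVerts_iff_exists {F : Finset (Sym2 V)} {x : V} :
    memVerts F x ↔ ∃ y, s(x, y) ∈ F := by
  constructor
  · rintro ⟨e, he, hx⟩
    obtain ⟨y, rfl⟩ := Sym2.mem_iff_exists.mp hx
    exact ⟨y, he⟩
  · rintro ⟨y, hy⟩
    exact ⟨s(x, y), hy, Sym2.mem_mk_left x y⟩

theorem gw_pos [DecidableEq V] {δ : ℝ} (hδ : 0 < δ) (F : Finset (Sym2 V)) (e : Sym2 V) :
    0 < gw δ F e := by
  unfold gw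
  split_ifs
  exacts [hδ, one_pos]

variable [Fintype V]

theorem TE_nonempty (F : Finset (Sym2 V)) : (TE F).Nonempty := by
  have exists_neighbor (x : V) : ∃ y, memVerts F x → s(x, y) ∈ F := by
    by_cases hx : memVerts F x
    · obtain ⟨y, hy⟩ := memVerts_iff_exists.mp hx
      exact ⟨y, fun _ => hy⟩
    · exact ⟨x, fun h => absurd h hx⟩
  choose next hnext using exists_neighbor
  refine ⟨fun x y => if memVerts F x ∧ y = next x then 1 else 0, fun x y => ?_, fun x hx => ?_,
    fun x y hxy => ?_⟩
  · positivity
  · simp [hx]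
  · obtain ⟨hx, rfl⟩ := (ite_ne_right_iff.mp hxy).1
    exact hnext x hx

theorem IsFlow.disintegrate_mem_TE {F : Finset (Sym2 V)} {ν : V → ℝ} {m p : V → V → ℝ}
    (hm : IsFlow ν m) (hmF : ∀ x y, m x y ≠ 0 → s(x, y) ∈ F) (hp : p ∈ TE F) :
    disintegrate ν m p ∈ TE F := by
  have eq_of_eq_zero {x : V} (hx : ν x = 0) : disintegrate ν m p x = p x :=
    funext fun _ => if_pos hx
  have eq_of_ne_zero {x : V} (hx : ν x ≠ 0) : disintegrate ν m p x = fun y => m x y / ν x :=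
    funext fun _ => if_neg hx
  refine ⟨fun x y => ?_, fun x hxF => ?_, fun x y hxy => ?_⟩
  · by_cases hx : ν x = 0
    · rw [eq_of_eq_zero hx]
      exact hp.1 x y
    · rw [eq_of_ne_zero hx]
      exact div_nonneg (hm.nonneg x y) (hm.marginal_nonneg x)
  · by_cases hx : ν x = 0
    · rw [eq_of_eq_zero hx, hp.2.1 x hxF]
    · rw [eq_of_ne_zero hx, ← Finset.sum_div, hm.sum_right, div_self hx]
  · by_cases hx : ν x = 0
    · rw [eq_of_eq_zero hx] at hxy
      exact hp.2.2 x y hxy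
    · rw [eq_of_ne_zero hx] at hxy
      exact hmF x y (div_ne_zero_iff.mp hxy).1

/-- A probability measure carried by the vertices of the edge set `F`, together with a kernel of
`𝒯(F)` leaving it invariant: the pair `(ν_k, q̂_k)` of the paper for `F = E_k`. -/
structure StationaryPair (F : Finset (Sym2 V)) where
  meas : ProbMeas V
  kernel : V → V → ℝ
  kernel_mem : kernel ∈ TE F
  memVerts_of_ne_zero : ∀ x, meas.1 x ≠ 0 → memVerts F x
  invariant : Invariant meas.1 kernel

namespace StationaryPair

variable {F : Finset (Sym2 V)}

/-- The flow `ν(x) q̂(x, y)` of a stationary pair. -/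
def flow (P : StationaryPair F) (x y : V) : ℝ := P.meas.1 x * P.kernel x y

theorem isFlow (P : StationaryPair F) : IsFlow P.meas.1 P.flow :=
  P.invariant.isFlow P.meas.2.1 P.kernel_mem.1 fun x hx =>
    P.kernel_mem.2.1 x (P.memVerts_of_ne_zero x hx)

theorem mem_of_flow_ne_zero (P : StationaryPair F) {x y : V} (h : P.flow x y ≠ 0) :
    s(x, y) ∈ F :=
  P.kernel_mem.2.2 x y (right_ne_zero_of_mul h)

theorem exists_of_isFlow {ν : ProbMeas V} {m : V → V → ℝ} (hm : IsFlow ν.1 m)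
    (hmF : ∀ x y, m x y ≠ 0 → s(x, y) ∈ F) : ∃ P : StationaryPair F, P.meas = ν := by
  obtain ⟨p, hp⟩ := TE_nonempty F
  refine ⟨⟨ν, disintegrate ν.1 m p, hm.disintegrate_mem_TE hmF hp, fun x hx => ?_,
    hm.invariant_disintegrate p⟩, rfl⟩
  obtain ⟨y, -, hy⟩ := Finset.exists_ne_zero_of_sum_ne_zero (hm.sum_right x ▸ hx)
  exact memVerts_iff_exists.mpr ⟨y, hmF x y hy⟩

-- The normalized indicator of `F` is the stationary flow of the simple random walk on `F`.
theorem nonempty (hF : F.Nonempty) : Nonempty (StationaryPair F) := by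
  let indicator (x y : V) : ℝ := if s(x, y) ∈ F then 1 else 0
  let total : ℝ := ∑ x, ∑ y, indicator x y
  have indicator_nonneg (x y : V) : 0 ≤ indicator x y := by positivity
  have total_pos : 0 < total := by
    obtain ⟨⟨a, b⟩, hab⟩ := hF
    have row_nonneg (x : V) : 0 ≤ ∑ y, indicator x y :=
      Finset.sum_nonneg fun y _ => indicator_nonneg x y
    calc (0 : ℝ) < 1 := one_pos
      _ = indicator a b := (if_pos hab).symm
      _ ≤ ∑ y, indicator a y :=
        Finset.single_le_sum (fun y _ => indicator_nonneg a y) (Finset.mem_univ b)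
      _ ≤ total := Finset.single_le_sum (fun x _ => row_nonneg x) (Finset.mem_univ a)
  have flow_nonneg (x y : V) : 0 ≤ indicator x y / total :=
    div_nonneg (indicator_nonneg x y) total_pos.le
  have hflow : IsFlow (fun x => ∑ y, indicator x y / total) fun x y => indicator x y / total :=
    IsFlow.of_symm flow_nonneg fun x y => by simp only [indicator, Sym2.eq_swap]
  let degreeMeas : ProbMeas V := ⟨fun x => ∑ y, indicator x y / total, hflow.marginal_nonneg, by
    simp only [← Finset.sum_div]
    exact div_self total_pos.ne'⟩
  obtain ⟨P, -⟩ := exists_of_isFlow (F := F) (ν := degreeMeas) hflow fun x y hxy =>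
    (ite_ne_right_iff.mp (div_ne_zero_iff.mp hxy).1).1
  exact ⟨P⟩

end StationaryPair

end EdgeSets

section Graph

variable {V : Type} [Fintype V] {G : SimpleGraph V} [DecidableRel G.Adj]

theorem memVerts_edgeFinset_iff {x : V} : memVerts G.edgeFinset x ↔ ∃ y, G.Adj x y := by
  simp only [memVerts_iff_exists, SimpleGraph.mem_edgeFinset, SimpleGraph.mem_edgeSet]

theorem TG_eq_TE_edgeFinset (hadj : ∀ x, ∃ y, G.Adj x y) : TG G = TE G.edgeFinset := by
  ext q
  simp only [TG, TE, Set.mem_ofPred_eq, memVerts_edgeFinset_iff, hadj, forall_const,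
    SimpleGraph.mem_edgeFinset, SimpleGraph.mem_edgeSet]

theorem exists_mem_TG_invariant_iff (hadj : ∀ x, ∃ y, G.Adj x y) (ν : ProbMeas V) :
    (∃ q ∈ TG G, Invariant ν.1 q) ↔ ∃ P : StationaryPair G.edgeFinset, P.meas = ν := by
  rw [TG_eq_TE_edgeFinset hadj]
  constructor
  · rintro ⟨q, hq, hinv⟩
    exact ⟨⟨ν, q, hq, fun x _ => memVerts_edgeFinset_iff.mpr (hadj x), hinv⟩, rfl⟩
  · rintro ⟨P, rfl⟩
    exact ⟨P.kernel, P.kernel_mem, P.invariant⟩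

theorem exists_edgeAdj_of_ssubset (hG : G.Preconnected) {F : Finset (Sym2 V)} (hF : F.Nonempty)
    (hFG : F ⊂ G.edgeFinset) : ∃ e ∈ G.edgeFinset, e ∉ F ∧ ∃ e' ∈ F, edgeAdj e e' := by
  obtain ⟨⟨a, b⟩, hab⟩ := hF
  obtain ⟨⟨x, y⟩, hxy, hxyF⟩ := Finset.exists_of_ssubset hFG
  by_cases hx : memVerts F x
  · obtain ⟨e', he', hxe'⟩ := hx
    exact ⟨s(x, y), hxy, hxyF, e', he', x, Sym2.mem_mk_left x y, hxe'⟩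
  · obtain ⟨walk⟩ := hG a x
    obtain ⟨d, -, ⟨e', he', hde'⟩, hd⟩ :=
      walk.exists_boundary_dart {v | memVerts F v} (memVerts_iff_exists.mpr ⟨b, hab⟩) hx
    have edge_notMem : d.edge ∉ F := fun h => hd ⟨d.edge, h, Sym2.mem_mk_right d.fst d.snd⟩
    exact ⟨d.edge, SimpleGraph.mem_edgeFinset.mpr d.edge_mem, edge_notMem, e', he', d.fst,
      Sym2.mem_mk_left d.fst d.snd, hde'⟩

variable [DecidableEq V] {v₁ : V} {δ : ℝ}

theorem phat_pos (hδ : 0 < δ) (F : Finset (Sym2 V)) {x y : V} (hxy : G.Adj x y) :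
    0 < phat G δ F x y := by
  rw [phat, if_pos hxy]
  exact div_pos (gw_pos hδ F _)
    (Finset.sum_pos (fun z _ => gw_pos hδ F _) ⟨y, (G.mem_neighborFinset x y).mpr hxy⟩)

theorem relEntInt_phat_lt_top (hδ : 0 < δ) (F : Finset (Sym2 V)) {q : V → V → ℝ}
    (hq : ∀ x y, q x y ≠ 0 → G.Adj x y) (ν : V → ℝ) : relEntInt ν q (phat G δ F) < ⊤ := by
  rw [relEntInt_eq_coe fun x y hp => of_not_not fun hxy => (phat_pos hδ F (hq x y hxy)).ne' hp]
  exact EReal.coe_lt_top _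

section Exploration

/-- `F'` arises from `F` by adding one new edge, adjacent to an edge of `F`: a single step of the
sequences in `ℰ`. -/
def IsAdjacentExtension (F F' : Finset (Sym2 V)) : Prop :=
  ∃ e ∉ F, F' = insert e F ∧ ∃ e' ∈ F, edgeAdj e e'

theorem exists_seq_isAdjacentExtension (hG : G.Preconnected) {F₀ : Finset (Sym2 V)}
    (hF₀ : F₀.Nonempty) (hF₀G : F₀ ⊆ G.edgeFinset) :
    ∃ S : ℕ → Finset (Sym2 V), S 0 = F₀ ∧ (∀ n, S n ⊆ G.edgeFinset) ∧
      ∀ n, S n ≠ G.edgeFinset → IsAdjacentExtension (S n) (S (n + 1)) := by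
  have exists_step (F : {F : Finset (Sym2 V) // F.Nonempty ∧ F ⊆ G.edgeFinset}) :
      ∃ F' : {F : Finset (Sym2 V) // F.Nonempty ∧ F ⊆ G.edgeFinset},
        F.1 ≠ G.edgeFinset → IsAdjacentExtension F.1 F'.1 := by
    by_cases hF : F.1 = G.edgeFinset
    · exact ⟨F, absurd hF⟩
    · obtain ⟨e, he, heF, hadj⟩ := exists_edgeAdj_of_ssubset hG F.2.1 (F.2.2.ssubset_of_ne hF)
      exact ⟨⟨insert e F.1, Finset.insert_nonempty e F.1, Finset.insert_subset he F.2.2⟩,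
        fun _ => ⟨e, heF, rfl, hadj⟩⟩
  choose step hstep using exists_step
  refine ⟨fun n => (step^[n] ⟨F₀, hF₀, hF₀G⟩).1, rfl, fun n => (step^[n] _).2.2, fun n hn => ?_⟩
  simp only [Function.iterate_succ_apply']
  exact hstep _ hn

theorem seqE_nonempty (hG : G.Preconnected) (hv₁ : ∃ y, G.Adj v₁ y) : (seqE G v₁).Nonempty := by
  obtain ⟨y, hy⟩ := hv₁
  obtain ⟨S, hS₀, hSG, hS⟩ := exists_seq_isAdjacentExtension hG
    (Finset.singleton_nonempty s(v₁, y))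
    (Finset.singleton_subset_iff.mpr (SimpleGraph.mem_edgeFinset.mpr hy))
  have ne_of_card (n : ℕ) (hn : n + 1 < G.edgeFinset.card) (hcard : (S n).card = n + 1) :
      S n ≠ G.edgeFinset := fun h => by rw [h] at hcard; omega
  have card_eq (n : ℕ) (hn : n < G.edgeFinset.card) : (S n).card = n + 1 := by
    induction n with
    | zero => rw [hS₀, Finset.card_singleton]
    | succ n ih =>
      obtain ⟨e, he, heq, -⟩ := hS n (ne_of_card n hn (ih (by omega)))
      rw [heq, Finset.card_insert_of_notMem he, ih (by omega)]
  have extends_of_succ_eq (k l : Fin G.edgeFinset.card) (hkl : (k : ℕ) + 1 = l) :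
      IsAdjacentExtension (S k) (S l) :=
    hkl ▸ hS k (ne_of_card k (by omega) (card_eq k k.2))
  refine ⟨fun k => S k, fun k => hSG k, fun k => card_eq k k.2, fun k l hkl => ?_, fun k hk => ?_,
    fun k l hkl e he => ?_⟩
  · obtain ⟨e, he, heq, -⟩ := extends_of_succ_eq k l hkl
    exact (Finset.ssubset_insert he).trans_eq heq.symm
  · exact ⟨s(v₁, y), by simp [hk, hS₀], Sym2.mem_mk_left v₁ y⟩
  · obtain ⟨e₀, he₀, heq, hadj⟩ := extends_of_succ_eq k l hkl
    obtain rfl : e = e₀ := by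
      simpa only [heq, Finset.insert_sdiff_cancel he₀, Finset.mem_singleton] using he
    exact hadj

theorem exists_mem_seqE_eq_edgeFinset (hG : G.Preconnected) (hv₁ : ∃ y, G.Adj v₁ y) :
    ∃ Es ∈ seqE G v₁, ∃ k, Es k = G.edgeFinset := by
  obtain ⟨Es, hEs⟩ := seqE_nonempty hG hv₁
  obtain ⟨y, hy⟩ := hv₁
  have card_pos : 0 < G.edgeFinset.card :=
    Finset.card_pos.mpr ⟨s(v₁, y), SimpleGraph.mem_edgeFinset.mpr hy⟩
  let last : Fin G.edgeFinset.card := ⟨G.edgeFinset.card - 1, Nat.sub_one_lt_of_lt card_pos⟩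
  have card_last : (Es last).card = G.edgeFinset.card :=
    (hEs.2.1 last).trans (Nat.sub_add_cancel card_pos)
  exact ⟨Es, hEs, last, Finset.eq_of_subset_of_card_le (hEs.1 last) card_last.ge⟩

theorem nonempty_of_mem_seqE {Es : Fin G.edgeFinset.card → Finset (Sym2 V)}
    (hEs : Es ∈ seqE G v₁) (k : Fin G.edgeFinset.card) : (Es k).Nonempty :=
  Finset.card_pos.mp (hEs.2.1 k ▸ Nat.succ_pos k)

end Exploration

/-- The elements of the set `Â(ν)` over which the rate function is an infimum. -/
structure AdmissibleTuple (G : SimpleGraph V) [DecidableRel G.Adj] (v₁ : V) (ν : ProbMeas V) where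
  edges : Fin G.edgeFinset.card → Finset (Sym2 V)
  edges_mem : edges ∈ seqE G v₁
  weight : Fin G.edgeFinset.card → ℝ
  weight_nonneg : ∀ k, 0 ≤ weight k
  sum_weight : ∑ k, weight k = 1
  pair : ∀ k, StationaryPair (edges k)
  sum_weight_mul : ∀ x, ∑ k, weight k * (pair k).meas.1 x = ν.1 x

namespace AdmissibleTuple

variable {ν : ProbMeas V}

/-- The quantity `∑ k, r_k ∫ R(q̂_k ‖ p̂_{E_k}) dν_k` minimized by the rate function. -/
def cost (T : AdmissibleTuple G v₁ ν) (δ : ℝ) : EReal :=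
  ∑ k, (T.weight k : EReal) *
    relEntInt (T.pair k).meas.1 (T.pair k).kernel (phat G δ (T.edges k))

theorem exists_stationaryPair (T : AdmissibleTuple G v₁ ν) :
    ∃ P : StationaryPair G.edgeFinset, P.meas = ν := by
  have hflow : IsFlow ν.1 fun x y => ∑ k, T.weight k * (T.pair k).flow x y :=
    funext T.sum_weight_mul ▸
      IsFlow.sum_mul (fun k _ => T.weight_nonneg k) fun k _ => (T.pair k).isFlow
  refine StationaryPair.exists_of_isFlow hflow fun x y hxy => ?_
  obtain ⟨k, -, hk⟩ := Finset.exists_ne_zero_of_sum_ne_zero hxy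
  exact T.edges_mem.1 k ((T.pair k).mem_of_flow_ne_zero (right_ne_zero_of_mul hk))

/-- The tuple of `Â(ν)` giving all the weight to a stationary pair `(ν, q̂)` on the `k`-th edge set
of a sequence in `ℰ`. The pairs on the other edge sets are arbitrary. -/
def concentrate {Es : Fin G.edgeFinset.card → Finset (Sym2 V)} (hEs : Es ∈ seqE G v₁)
    (k : Fin G.edgeFinset.card) (P : StationaryPair (Es k)) : AdmissibleTuple G v₁ P.meas where
  edges := Es
  edges_mem := hEs
  weight := Pi.single k 1
  weight_nonneg l := by
    rw [Pi.single_apply]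
    positivity
  sum_weight := Fintype.sum_pi_single' k 1
  pair := Function.update
    (fun l => (StationaryPair.nonempty (nonempty_of_mem_seqE hEs l)).some) k P
  sum_weight_mul x := by simp [Pi.single_apply]

theorem cost_concentrate {Es : Fin G.edgeFinset.card → Finset (Sym2 V)} (hEs : Es ∈ seqE G v₁)
    (k : Fin G.edgeFinset.card) (P : StationaryPair (Es k)) (δ : ℝ) :
    (concentrate hEs k P).cost δ = relEntInt P.meas.1 P.kernel (phat G δ (Es k)) := by
  rw [cost, Fintype.sum_eq_single k fun l hl => by simp [concentrate, hl]]
  simp [concentrate]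

theorem exists_cost_lt_top (hδ : 0 < δ) {F : Finset (Sym2 V)}
    (hF : ∃ Es ∈ seqE G v₁, ∃ k, Es k = F) (P : StationaryPair F) :
    ∃ T : AdmissibleTuple G v₁ P.meas, T.cost δ < ⊤ := by
  obtain ⟨Es, hEs, k, rfl⟩ := hF
  refine ⟨concentrate hEs k P, ?_⟩
  rw [cost_concentrate]
  exact relEntInt_phat_lt_top hδ (Es k) (fun x y hxy =>
    SimpleGraph.mem_edgeFinset.mp (hEs.1 k (P.kernel_mem.2.2 x y hxy))) P.meas.1

end AdmissibleTuple

theorem Ifun_eq_iInf_cost (G : SimpleGraph V) [DecidableRel G.Adj] (v₁ : V) (δ : ℝ)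
    (ν : ProbMeas V) : Ifun G v₁ δ ν = ⨅ T : AdmissibleTuple G v₁ ν, T.cost δ := by
  refine congrArg sInf (Set.ext fun c => ⟨?_, ?_⟩)
  · rintro ⟨νs, r, Es, qs, hEs, hr, hsum, hsupp, hν, hqs, hinv, rfl⟩
    exact ⟨⟨Es, hEs, r, hr, hsum, fun k => ⟨νs k, qs k, hqs k, hsupp k, hinv k⟩, hν⟩, rfl⟩
  · rintro ⟨T, rfl⟩
    exact ⟨fun k => (T.pair k).meas, T.weight, T.edges, fun k => (T.pair k).kernel, T.edges_mem,
      T.weight_nonneg, T.sum_weight, fun k => (T.pair k).memVerts_of_ne_zero, T.sum_weight_mul,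
      fun k => (T.pair k).kernel_mem, fun k => (T.pair k).invariant, rfl⟩

theorem Ifun_lt_top_iff_exists_stationaryPair (hδ : 0 < δ) (hG : G.Preconnected)
    (hv₁ : ∃ y, G.Adj v₁ y) (ν : ProbMeas V) :
    Ifun G v₁ δ ν < ⊤ ↔ ∃ P : StationaryPair G.edgeFinset, P.meas = ν := by
  rw [Ifun_eq_iInf_cost, iInf_lt_iff]
  constructor
  · rintro ⟨T, -⟩
    exact T.exists_stationaryPair
  · rintro ⟨P, rfl⟩
    exact AdmissibleTuple.exists_cost_lt_top hδ (exists_mem_seqE_eq_edgeFinset hG hv₁) P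

end Graph

/-- `I_δ(ν) < ∞` iff `ν` is invariant for some `q̂ ∈ 𝒯_G`. -/
theorem orrw_rate_finite_iff {V : Type} [Fintype V] [DecidableEq V]
    (G : SimpleGraph V) [DecidableRel G.Adj] (hG : G.Connected)
    (hV : 3 ≤ Fintype.card V) (v₁ : V) (δ : ℝ) (hδ : 0 < δ) :
    ∀ ν : ProbMeas V, Ifun G v₁ δ ν < ⊤ ↔ ∃ q ∈ TG G, Invariant ν.1 q := by
  intro ν
  have : Nontrivial V := Fintype.one_lt_card_iff_nontrivial.mp (by omega)
  have hadj := hG.preconnected.exists_adj_of_nontrivial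
  rw [exists_mem_TG_invariant_iff hadj,
    Ifun_lt_top_iff_exists_stationaryPair hδ hG.preconnected (hadj v₁)]

end ORRW
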